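/- Let n ≥ 1, let A : ℝ → Matrix (Fin n) (Fin n) ℂ be continuous, and let Y : ℝ → Matrix (Fin n) (Fin n) ℂ be differentiable with Y'(x) = A(x) * Y(x) for all x ∈ ℝ. Then for all x₀, x ∈ ℝ one has det(Y(x)) = det(Y(x₀)) · exp(∫_{x₀}^{x} trace(A(t)) dt). -/

import Mathlib

attribute [local instance] Matrix.normedAddCommGroup Matrix.normedSpace

/-! By Jacobi's formula, `det Y` solves the scalar linear equation `f' = tr A * f`; multiplying it
by the integrating factor `exp (-∫ tr A)` gives a function with zero derivative. -/

section Jacobi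

variable {ι R : Type*} [Fintype ι] [DecidableEq ι]

theorem sum_det_updateRow_eq_trace_mul_adjugate [CommRing R] (M N : Matrix ι ι R) :
    ∑ i, (M.updateRow i (N i)).det = (N * M.adjugate).trace := by
  refine Finset.sum_congr rfl fun i _ => ?_
  rw [← Matrix.cramer_transpose_apply, Matrix.cramer_eq_adjugate_mulVec,
    ← Matrix.adjugate_transpose, Matrix.mulVec_transpose, Matrix.diag_apply,
    Matrix.mul_apply_eq_vecMul]

/-- The determinant as a continuous alternating map of the rows, the form in which it can be
differentiated; its algebraic counterpart is `Matrix.detRowAlternating`. -/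
def detRowContinuousAlternating (ι R : Type*) [Fintype ι] [DecidableEq ι] [CommRing R]
    [TopologicalSpace R] [IsTopologicalRing R] : (ι → R) [⋀^ι]→L[R] R where
  __ := Matrix.detRowAlternating
  cont := continuous_id.matrix_det

variable {𝕜 : Type*} [NontriviallyNormedField 𝕜] [NormedCommRing R] [NormedAlgebra 𝕜 R]

theorem hasDerivAt_det {Y : 𝕜 → Matrix ι ι R} {Y' : Matrix ι ι R} {x : 𝕜}
    (hY : HasDerivAt Y Y' x) :
    HasDerivAt (fun t => (Y t).det) (Y' * (Y x).adjugate).trace x := by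
  rw [← sum_det_updateRow_eq_trace_mul_adjugate]
  have hdet := (((detRowContinuousAlternating ι R).restrictScalars 𝕜).hasFDerivAt
    (Y x)).comp_hasDerivAt x hY
  exact hdet.congr_deriv (ContinuousMultilinearMap.linearDeriv_apply _ _ _)

theorem hasDerivAt_det_of_hasDerivAt_mul {B : Matrix ι ι R} {Y : 𝕜 → Matrix ι ι R} {x : 𝕜}
    (hY : HasDerivAt Y (B * Y x) x) :
    HasDerivAt (fun t => (Y t).det) (B.trace * (Y x).det) x := by
  have htrace : (B * Y x * (Y x).adjugate).trace = B.trace * (Y x).det := by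
    rw [mul_assoc, Matrix.mul_adjugate, Matrix.mul_smul, mul_one, Matrix.trace_smul, smul_eq_mul,
      mul_comm]
  exact htrace ▸ hasDerivAt_det hY

end Jacobi

section LinearODE

theorem hasDerivAt_exp_comp {𝕜 R : Type*} [RCLike 𝕜] [NormedCommRing R] [NormedAlgebra 𝕜 R]
    [CompleteSpace R] {f : 𝕜 → R} {f' : R} {x : 𝕜} (hf : HasDerivAt f f' x) :
    HasDerivAt (fun t => NormedSpace.exp (f t)) (NormedSpace.exp (f x) * f') x :=
  (hasFDerivAt_exp (𝕂 := 𝕜) (x := f x)).comp_hasDerivAt x hf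

variable {R : Type*} [NormedCommRing R] [NormedAlgebra ℝ R] [CompleteSpace R]

theorem eq_mul_exp_integral_of_hasDerivAt {f g : ℝ → R} (hg : Continuous g)
    (hf : ∀ x, HasDerivAt f (g x * f x) x) (x₀ x : ℝ) :
    f x = f x₀ * NormedSpace.exp (∫ t in x₀..x, g t) := by
  let G : ℝ → R := fun s => ∫ t in x₀..s, g t
  have hG (s : ℝ) : HasDerivAt G (g s) s := (hg.integral_hasStrictDerivAt x₀ s).hasDerivAt
  have hexp (s : ℝ) : HasDerivAt (fun u => NormedSpace.exp (-G u))
      (NormedSpace.exp (-G s) * -g s) s :=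
    hasDerivAt_exp_comp (hG s).fun_neg
  have hderiv (s : ℝ) : HasDerivAt (fun u => f u * NormedSpace.exp (-G u)) 0 s :=
    ((hf s).mul (hexp s)).congr_deriv (by ring)
  have hconst : f x * NormedSpace.exp (-G x) = f x₀ := by
    have := is_const_of_deriv_eq_zero (fun s => (hderiv s).differentiableAt)
      (fun s => (hderiv s).deriv) x x₀
    simpa [G] using this
  let : NormedAlgebra ℚ R := NormedAlgebra.restrictScalars ℚ ℝ R
  calc f x = f x * NormedSpace.exp (-G x + G x) := by simp
    _ = f x * NormedSpace.exp (-G x) * NormedSpace.exp (G x) := by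
      rw [NormedSpace.exp_add, mul_assoc]
    _ = f x₀ * NormedSpace.exp (G x) := by rw [hconst]

end LinearODE

theorem abel_liouville_general {ι R : Type*} [Fintype ι] [DecidableEq ι] [NormedCommRing R]
    [NormedAlgebra ℝ R] [CompleteSpace R] {A Y : ℝ → Matrix ι ι R}
    (hA : Continuous fun t => (A t).trace) (hY : ∀ x, HasDerivAt Y (A x * Y x) x) (x₀ x : ℝ) :
    (Y x).det = (Y x₀).det * NormedSpace.exp (∫ t in x₀..x, (A t).trace) :=
  eq_mul_exp_integral_of_hasDerivAt hA (fun s => hasDerivAt_det_of_hasDerivAt_mul (hY s)) x₀ x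

/-- Abel's theorem (Liouville's formula): if `Y' = A x * Y` with `A` continuous,
then `det (Y x) = det (Y x₀) * exp (∫_{x₀}^x tr (A t) dt)`. -/
theorem abel_liouville (n : ℕ) (hn : 1 ≤ n)
    (A Y : ℝ → Matrix (Fin n) (Fin n) ℂ)
    (hA : Continuous A)
    (hY : ∀ x : ℝ, HasDerivAt Y (A x * Y x) x) :
    ∀ x₀ x : ℝ, (Y x).det = (Y x₀).det * Complex.exp (∫ t in x₀..x, (A t).trace) := by
  rw [Complex.exp_eq_exp_ℂ]
  exact abel_liouville_general hA.matrix_trace hY
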